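/- Let r be an odd prime with r ≠ 5 and let V be the deleted permutation module over ZMod r with the action of Y = alternatingGroup (Fin 5). Let W be any finite-dimensional ZMod r-vector space with a ZMod r-linear action of Y that admits a chain of Y-invariant subspaces 0 = W₀ ⊆ W₁ ⊆ ⋯ ⊆ Wₙ = W such that each successive quotient W_{i+1} ⧸ W_i is Y-equivariantly isomorphic to V. Then W is completely reducible: every Y-invariant subspace of W has a Y-invariant direct complement. -/

import Mathlib

/-- The deleted permutation module: functions `Fin 5 → ZMod r` summing to zero. -/
def V (r : ℕ) : Submodule (ZMod r) (Fin 5 → ZMod r) where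
  carrier := {f | ∑ i, f i = 0}
  add_mem' := by
    intro a b ha hb
    simp only [Set.mem_setOf_eq, Pi.add_apply, Finset.sum_add_distrib] at *
    rw [ha, hb, add_zero]
  zero_mem' := by simp
  smul_mem' := by
    intro c f hf
    simp only [Set.mem_setOf_eq, Pi.smul_apply, smul_eq_mul, ← Finset.mul_sum] at *
    rw [hf, mul_zero]

/-- The permutation action of `Equiv.Perm (Fin 5)` on `V r`, given by `σ • f = f ∘ σ⁻¹`. -/
def rho (r : ℕ) : Representation (ZMod r) (Equiv.Perm (Fin 5)) (V r) where
  toFun σ :=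
    { toFun := fun f => ⟨fun i => (f : Fin 5 → ZMod r) (σ⁻¹ i),
        (Equiv.sum_comp σ⁻¹ (f : Fin 5 → ZMod r)).trans f.2⟩
      map_add' := fun _ _ => rfl
      map_smul' := fun _ _ => rfl }
  map_one' := rfl
  map_mul' := fun _ _ => rfl

/-!
The powers of a five-cycle `s` sum to zero on `V`. On a module filtered by copies of `V` the same
sum `C` is therefore nilpotent; as `C * C = 5 * C` and `5` is invertible, `C = 0`.

From then on only `C = 0` matters. Let `E` be the sum over the Klein four-group `K` fixing `0`.
If `x` is fixed by `K`, evaluating `C = 0` and `t⁻¹ * C * t⁻¹ = 0` at `x`, for a three-cycle `t`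
normalising `K`, shows that `t` fixes `x`. So `E` absorbs the stabiliser of `0`, for every linear
`π` the map `E * π * E` commutes with this stabiliser, and its sum `P` over the five cosets commutes
with `Alt(5)`.

If `d` is an involution inverting `s`, then all `s ^ i * d` are involutions, so adding up the
conjugates of `C * d = 0` gives `20` times the sum of the fifteen involutions. That sum therefore
vanishes, and the five conjugates of `E` sum to `5`. Hence, when `π` projects onto `U`, the range of
`P` lies in `U` and `P` is `4 * 5` on `U`. This replaces the averaging of Maschke's theorem, which
is not available for `r = 3`.
-/

namespace AltFive

open MulAction

section Filtration

variable {k W : Type*} [CommRing k] [AddCommGroup W] [Module k W]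

theorem eq_zero_of_mul_self_eq_smul_of_filtration {T : Module.End k W} {a : k} (ha : IsUnit a)
    (hT : T * T = a • T) {n : ℕ} {c : ℕ → Submodule k W} (h0 : c 0 = ⊥) (hn : c n = ⊤)
    (hstep : ∀ i < n, ∀ x ∈ c (i + 1), T x ∈ c i) : T = 0 := by
  have range_le (i : ℕ) (hi : i ≤ n) : ∀ x, T x ∈ c i := by
    induction hi using Nat.decreasingInduction with
    | self => simp [hn]
    | of_succ i hi ih =>
      intro x
      have apply_apply : T (T x) = a • T x := LinearMap.congr_fun hT x
      exact ((c i).smul_mem_iff_of_isUnit ha).1 (apply_apply ▸ hstep i hi _ (ih x))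
  ext x
  simpa [h0] using range_le 0 n.zero_le x

theorem sum_apply_mem_of_quotient_embedding {G M ι : Type*} [Group G] [Fintype ι]
    [AddCommGroup M] [Module k M] (ρ : Representation k G W) (τ : Representation k G M)
    {N N' : Submodule k W} (hinv : ∀ g, ∀ x ∈ N, ρ g x ∈ N)
    (e : (N ⧸ N'.comap N.subtype) →ₗ[k] M) (he : Function.Injective e)
    (hequiv : ∀ g, ∀ x y : N, (x : W) = ρ g y →
      e (Submodule.Quotient.mk x) = τ g (e (Submodule.Quotient.mk y)))
    {s : ι → G} (hs : ∑ i, τ (s i) = 0) {x : W} (hx : x ∈ N) : (∑ i, ρ (s i)) x ∈ N' := by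
  let y (i : ι) : N := ⟨ρ (s i) x, hinv _ _ hx⟩
  have map_zero' : e (Submodule.Quotient.mk (∑ i, y i)) = 0 := by
    rw [← Submodule.mkQ_apply, map_sum, map_sum]
    calc ∑ i, e (Submodule.Quotient.mk (y i))
        = ∑ i, τ (s i) (e (Submodule.Quotient.mk ⟨x, hx⟩)) :=
          Finset.sum_congr rfl fun i _ ↦ hequiv (s i) (y i) ⟨x, hx⟩ rfl
      _ = 0 := by rw [← LinearMap.sum_apply, hs, LinearMap.zero_apply]
  have mem := (Submodule.Quotient.mk_eq_zero _).1 ((map_eq_zero_iff e he).1 map_zero')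
  simpa [y] using mem

end Filtration

section RelativeTrace

variable {k W G ι : Type*} [CommRing k] [AddCommGroup W] [Module k W] [Group G]
  (ρ : Representation k G W)

theorem norm_mul_norm [Fintype G] : ρ.norm * ρ.norm = Fintype.card G • ρ.norm := by
  nth_rewrite 1 [Representation.norm]
  simp only [Finset.sum_mul, Module.End.mul_eq_comp, Representation.self_comp_norm,
    Finset.sum_const, Finset.card_univ]

theorem commute_norm_of_mem_normalizer {K : Subgroup G} [Fintype K] {a : G}
    (ha : a ∈ Subgroup.normalizer (K : Set G)) :
    Commute (ρ a) (Representation.norm (ρ.comp K.subtype)) := by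
  simp only [Commute, SemiconjBy, Representation.norm, Finset.mul_sum, Finset.sum_mul]
  refine Fintype.sum_equiv (K.normalizerMonoidHom ⟨a, ha⟩).toEquiv _ _ fun v ↦ ?_
  simp [← map_mul]

theorem exists_invariant_isCompl_of_isProj {U : Submodule k W} {f : Module.End k W}
    (hf : LinearMap.IsProj U f) (hcomm : ∀ g, Commute (ρ g) f) :
    ∃ U' : Submodule k W, (∀ g, ∀ x ∈ U', ρ g x ∈ U') ∧ IsCompl U U' := by
  refine ⟨LinearMap.ker f, fun g x hx ↦ ?_, hf.isCompl⟩
  have := LinearMap.congr_fun (hcomm g).eq x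
  simpa [LinearMap.mem_ker.1 hx] using this.symm

variable [Fintype ι]

/-- The relative trace (transfer) of an endomorphism `θ` from a subgroup to `G`, for the family `s`
of coset representatives. It does not depend on `s` when `θ` commutes with the subgroup. -/
def relativeTrace (s : ι → G) (θ : Module.End k W) : Module.End k W :=
  ∑ i, ρ (s i) * θ * ρ (s i)⁻¹

theorem relativeTrace_smul (s : ι → G) (a : k) (θ : Module.End k W) :
    relativeTrace ρ s (a • θ) = a • relativeTrace ρ s θ := by
  simp only [relativeTrace, Finset.smul_sum, mul_smul_comm, smul_mul_assoc]

variable {ρ}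

theorem relativeTrace_apply_mem {s : ι → G} {θ : Module.End k W} {U : Submodule k W}
    (hU : ∀ g, ∀ x ∈ U, ρ g x ∈ U) (hθ : ∀ x, θ x ∈ U) (x : W) : relativeTrace ρ s θ x ∈ U := by
  rw [relativeTrace, LinearMap.sum_apply]
  exact U.sum_mem fun i _ ↦ hU _ _ (hθ _)

theorem relativeTrace_apply_congr {s : ι → G} {θ θ' : Module.End k W} {U : Submodule k W}
    (hU : ∀ g, ∀ x ∈ U, ρ g x ∈ U) (hθ : ∀ x ∈ U, θ x = θ' x) {x : W} (hx : x ∈ U) :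
    relativeTrace ρ s θ x = relativeTrace ρ s θ' x := by
  simp only [relativeTrace, LinearMap.sum_apply, Module.End.mul_apply, hθ _ (hU _ _ hx)]

theorem commute_relativeTrace [MulAction G ι] {o : ι} {s : ι → G} (hs : ∀ i, s i • o = i)
    {θ : Module.End k W} (hθ : ∀ a ∈ stabilizer G o, Commute (ρ a) θ) (g : G) :
    Commute (ρ g) (relativeTrace ρ s θ) := by
  simp only [Commute, SemiconjBy, relativeTrace, Finset.mul_sum, Finset.sum_mul]
  refine Fintype.sum_equiv (MulAction.toPerm g) _ _ fun i ↦ ?_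
  rw [MulAction.toPerm_apply]
  set j := g • i
  have mem_stabilizer : (s j)⁻¹ * g * s i ∈ stabilizer G o := by
    rw [mem_stabilizer_iff, mul_smul, mul_smul, hs, inv_smul_eq_iff, hs]
  calc ρ g * (ρ (s i) * θ * ρ (s i)⁻¹)
      = ρ (s j) * (ρ ((s j)⁻¹ * g * s i) * θ) * ρ (s i)⁻¹ := by
        simp only [← mul_assoc, ← map_mul, mul_inv_cancel, one_mul]
    _ = ρ (s j) * (θ * ρ ((s j)⁻¹ * g * s i)) * ρ (s i)⁻¹ := by rw [hθ _ mem_stabilizer]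
    _ = ρ (s j) * θ * ρ (s j)⁻¹ * ρ g := by
        simp only [mul_assoc, ← map_mul, mul_inv_cancel, mul_one]

end RelativeTrace

/-- The five-cycle power `j ↦ i + j`. These are also representatives for the cosets of the
stabiliser of `0`. -/
def rotation (i : Fin 5) : alternatingGroup (Fin 5) :=
  ⟨Equiv.addLeft i, Equiv.Perm.mem_alternatingGroup.2 (by decide +revert)⟩

/-- The involution `j ↦ -j`, which inverts every rotation. -/
def reflection : alternatingGroup (Fin 5) :=
  ⟨Equiv.neg (Fin 5), Equiv.Perm.mem_alternatingGroup.2 (by decide)⟩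

/-- A second involution fixing `0`. -/
def doubleSwap : alternatingGroup (Fin 5) :=
  ⟨c[1, 2] * c[3, 4], Equiv.Perm.mem_alternatingGroup.2 (by decide)⟩

/-- A three-cycle fixing `0`, which together with `kleinFour` generates the stabiliser of `0`. -/
def threeCycle : alternatingGroup (Fin 5) :=
  ⟨c[2, 4, 3], Equiv.Perm.mem_alternatingGroup.2 (by decide)⟩

/-- The Klein four-group of all `σ` in the stabiliser of `0` with `σ ^ 2 = 1`. -/
def kleinFour : Subgroup (alternatingGroup (Fin 5)) where
  carrier := {σ | σ • (0 : Fin 5) = 0 ∧ σ * σ = 1}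
  one_mem' := by decide
  mul_mem' {σ τ} hσ hτ := by
    have mul_mem : ∀ σ : alternatingGroup (Fin 5), σ • (0 : Fin 5) = 0 ∧ σ * σ = 1 →
        ∀ τ : alternatingGroup (Fin 5), τ • (0 : Fin 5) = 0 ∧ τ * τ = 1 →
          (σ * τ) • (0 : Fin 5) = 0 ∧ σ * τ * (σ * τ) = 1 := by
      decide +kernel
    exact mul_mem σ hσ τ hτ
  inv_mem' {σ} hσ := ⟨inv_smul_eq_iff.2 hσ.1.symm, by rw [← mul_inv_rev, hσ.2, inv_one]⟩

instance : DecidablePred (· ∈ kleinFour) :=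
  fun σ ↦ inferInstanceAs (Decidable (σ • (0 : Fin 5) = 0 ∧ σ * σ = 1))

/-- The fifteen elements of order two. -/
def involutions : Finset (alternatingGroup (Fin 5)) :=
  {σ | σ * σ = 1 ∧ σ ≠ 1}

section Combinatorics

variable {M : Type*} [AddCommMonoid M] (f : alternatingGroup (Fin 5) → M)

theorem rotation_smul_zero (i : Fin 5) : rotation i • (0 : Fin 5) = i :=
  add_zero i

theorem rotation_mul_rotation (i j : Fin 5) : rotation i * rotation j = rotation (i + j) := by
  decide +revert

theorem card_kleinFour : Fintype.card kleinFour = 4 := by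
  decide +kernel

theorem exists_threeCycle_pow_mul {σ : alternatingGroup (Fin 5)}
    (hσ : σ ∈ stabilizer (alternatingGroup (Fin 5)) (0 : Fin 5)) :
    ∃ j : Fin 3, ∃ v ∈ kleinFour, threeCycle ^ (j : ℕ) * v = σ := by
  rw [mem_stabilizer_iff] at hσ
  decide +kernel +revert

theorem stabilizer_zero_le_normalizer_kleinFour :
    stabilizer (alternatingGroup (Fin 5)) (0 : Fin 5) ≤
      Subgroup.normalizer (kleinFour : Set (alternatingGroup (Fin 5))) := by
  intro a ha
  rw [mem_stabilizer_iff] at ha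
  refine Subgroup.mem_normalizer_iff.2 fun v ↦ and_congr ?_ ?_
  · rw [mul_smul, mul_smul, inv_smul_eq_iff.2 ha.symm, smul_eq_iff_eq_inv_smul a,
      inv_smul_eq_iff.2 ha.symm]
  · rw [conj_mul, conj_eq_one_iff]

theorem rotation_mul_reflection_mem_involutions (i : Fin 5) :
    rotation i * reflection ∈ involutions :=
  Finset.mem_filter.2 ⟨Finset.mem_univ _, by decide +revert⟩

theorem exists_conj_reflection {σ : alternatingGroup (Fin 5)} (hσ : σ ∈ involutions) :
    ∃ h, h * reflection * h⁻¹ = σ := by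
  have exists_conj : ∀ σ ∈ involutions, ∃ h, h * reflection * h⁻¹ = σ := by decide +kernel
  exact exists_conj σ hσ

theorem sum_conj_reflection :
    ∑ g, f (g * reflection * g⁻¹) = 4 • ∑ τ ∈ involutions, f τ := by
  let conj (g : alternatingGroup (Fin 5)) := g * reflection * g⁻¹
  have image_eq : Finset.univ.image conj = involutions := by decide +kernel
  have card_fiber : ∀ τ ∈ involutions, Finset.card {g | conj g = τ} = 4 := by decide +kernel
  rw [Finset.sum_comp f conj, image_eq, Finset.smul_sum]
  exact Finset.sum_congr rfl fun τ hτ ↦ by rw [card_fiber τ hτ]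

theorem sum_conj_of_mem_involutions {σ : alternatingGroup (Fin 5)} (hσ : σ ∈ involutions) :
    ∑ g, f (g * σ * g⁻¹) = 4 • ∑ τ ∈ involutions, f τ := by
  obtain ⟨h, rfl⟩ := exists_conj_reflection hσ
  rw [← sum_conj_reflection f]
  exact Fintype.sum_equiv (Equiv.mulRight h) _ _ fun g ↦ by
    simp only [Equiv.coe_mulRight, mul_inv_rev, mul_assoc]

theorem sum_rotation_conj_kleinFour :
    ∑ i, ∑ v : kleinFour, f (rotation i * v * (rotation i)⁻¹) =
      5 • f 1 + ∑ τ ∈ involutions, f τ := by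
  let conj (p : Fin 5 × kleinFour) := rotation p.1 * p.2 * (rotation p.1)⁻¹
  have image_eq : Finset.univ.image conj = insert 1 involutions := by decide +kernel
  have card_fiber_one : Finset.card {p | conj p = 1} = 5 := by decide +kernel
  have card_fiber : ∀ τ ∈ involutions, Finset.card {p | conj p = τ} = 1 := by decide +kernel
  rw [← Fintype.sum_prod_type' (fun i (v : kleinFour) ↦ f (rotation i * v * (rotation i)⁻¹)),
    Finset.sum_comp f conj, image_eq, Finset.sum_insert (by decide), card_fiber_one]
  congr 1
  exact Finset.sum_congr rfl fun τ hτ ↦ by rw [card_fiber τ hτ, one_smul]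

end Combinatorics

theorem isUnit_twenty {k : Type*} [CommRing k] (h2 : IsUnit (2 : k)) (h5 : IsUnit (5 : k)) :
    IsUnit (20 : k) := by
  convert (h2.mul h2).mul h5 using 1
  norm_num

section RotationSum

variable {k W : Type*} [CommRing k] [AddCommGroup W] [Module k W]
  (ρ : Representation k (alternatingGroup (Fin 5)) W)

/-- The sum of the powers of a five-cycle, acting through `ρ`. -/
def rotationSum : Module.End k W :=
  ∑ i, ρ (rotation i)

/-- The sum of the elements of `kleinFour`, acting through `ρ`. -/
def kleinFourSum : Module.End k W :=
  Representation.norm (ρ.comp kleinFour.subtype)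

theorem rotationSum_mul_self : rotationSum ρ * rotationSum ρ = (5 : k) • rotationSum ρ := by
  have rotation_mul (i : Fin 5) : ρ (rotation i) * rotationSum ρ = rotationSum ρ := by
    simp only [rotationSum, Finset.mul_sum, ← map_mul, rotation_mul_rotation]
    exact Equiv.sum_comp (Equiv.addLeft i) fun j ↦ ρ (rotation j)
  nth_rewrite 1 [rotationSum]
  simp only [Finset.sum_mul, rotation_mul, Finset.sum_const, Finset.card_univ, Fintype.card_fin,
    ofNat_smul_eq_nsmul k]

theorem kleinFourSum_mul_self : kleinFourSum ρ * kleinFourSum ρ = (4 : k) • kleinFourSum ρ := by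
  rw [kleinFourSum, norm_mul_norm, card_kleinFour, ofNat_smul_eq_nsmul k]

theorem kleinFourSum_apply_mem {U : Submodule k W} (hU : ∀ g, ∀ x ∈ U, ρ g x ∈ U) {x : W}
    (hx : x ∈ U) : kleinFourSum ρ x ∈ U := by
  rw [kleinFourSum, Representation.norm, LinearMap.sum_apply]
  exact U.sum_mem fun v _ ↦ hU _ _ hx

variable {ρ}

theorem apply_eq_of_kleinFour_fixed {x : W} (hx : ∀ v ∈ kleinFour, ρ v x = x)
    {g h v : alternatingGroup (Fin 5)} (hg : g = h * v) (hv : v ∈ kleinFour) :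
    ρ g x = ρ h x := by
  rw [hg, map_mul, Module.End.mul_apply, hx v hv]

theorem exists_eq_neg_add_of_kleinFour_fixed (hρ : rotationSum ρ = 0) {x : W}
    (hx : ∀ v ∈ kleinFour, ρ v x = x) :
    ∃ y, x = -(y + ρ reflection y) ∧ ρ threeCycle x = -(y + ρ doubleSwap y) := by
  refine ⟨ρ (rotation 1) x + ρ (rotation 3) x, ?_, ?_⟩
  · have sum_eq_zero : ∑ i, ρ (rotation i) x = 0 := by
      rw [← LinearMap.sum_apply, ← rotationSum, hρ, LinearMap.zero_apply]
    have apply_zero : ρ (rotation 0) x = x :=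
      hx _ (by decide)
    have apply_two : ρ (rotation 2) x = ρ (reflection * rotation 3) x :=
      apply_eq_of_kleinFour_fixed hx (v := reflection) (by decide) (by decide)
    have apply_four : ρ (rotation 4) x = ρ (reflection * rotation 1) x :=
      apply_eq_of_kleinFour_fixed hx (v := reflection) (by decide) (by decide)
    rw [Fin.sum_univ_five, apply_zero, apply_two, apply_four] at sum_eq_zero
    rw [eq_neg_iff_add_eq_zero, ← sum_eq_zero]
    simp only [map_add, map_mul, Module.End.mul_apply]
    abel
  · let conj (i : Fin 5) := threeCycle⁻¹ * rotation i * threeCycle⁻¹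
    have sum_eq_zero : ∑ i, ρ (conj i) x = 0 := by
      simp only [conj, map_mul, Module.End.mul_apply, ← map_sum, ← LinearMap.sum_apply]
      rw [← rotationSum, hρ, LinearMap.zero_apply, map_zero]
    have apply_zero : ρ (conj 0) x = ρ threeCycle x :=
      apply_eq_of_kleinFour_fixed hx (v := 1) (by decide) (by decide)
    have apply_one : ρ (conj 1) x = ρ (rotation 1) x :=
      apply_eq_of_kleinFour_fixed hx (v := doubleSwap) (by decide) (by decide)
    have apply_two : ρ (conj 2) x = ρ (rotation 3) x :=
      apply_eq_of_kleinFour_fixed hx (v := 1) (by decide) (by decide)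
    have apply_three : ρ (conj 3) x = ρ (doubleSwap * rotation 3) x :=
      apply_eq_of_kleinFour_fixed hx (v := doubleSwap * reflection) (by decide) (by decide)
    have apply_four : ρ (conj 4) x = ρ (doubleSwap * rotation 1) x :=
      apply_eq_of_kleinFour_fixed hx (v := reflection) (by decide) (by decide)
    rw [Fin.sum_univ_five, apply_zero, apply_one, apply_two, apply_three, apply_four]
      at sum_eq_zero
    rw [eq_neg_iff_add_eq_zero, ← sum_eq_zero]
    simp only [map_add, map_mul, Module.End.mul_apply]
    abel

variable (h2 : IsUnit (2 : k)) (hρ : rotationSum ρ = 0)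

include h2 hρ

theorem threeCycle_apply_of_kleinFour_fixed {x : W} (hx : ∀ v ∈ kleinFour, ρ v x = x) :
    ρ threeCycle x = x := by
  obtain ⟨y, x_eq, threeCycle_x_eq⟩ := exists_eq_neg_add_of_kleinFour_fixed hρ hx
  have doubleSwap_x : ρ doubleSwap x = x := hx doubleSwap (by decide)
  have reflection_threeCycle_x : ρ reflection (ρ threeCycle x) = ρ threeCycle x := by
    rw [← Module.End.mul_apply, ← map_mul]
    exact apply_eq_of_kleinFour_fixed hx (v := doubleSwap) (by decide) (by decide)
  have reflection_doubleSwap : ρ reflection (ρ doubleSwap y) = ρ doubleSwap (ρ reflection y) := by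
    have mul_comm' : reflection * doubleSwap = doubleSwap * reflection := by decide
    rw [← Module.End.mul_apply, ← map_mul, mul_comm', map_mul, Module.End.mul_apply]
  refine h2.smul_left_cancel.1 ?_
  calc (2 : k) • ρ threeCycle x
      = ρ threeCycle x + ρ reflection (ρ threeCycle x) := by rw [two_smul, reflection_threeCycle_x]
    _ = -(y + ρ reflection y) + ρ doubleSwap (-(y + ρ reflection y)) := by
      rw [threeCycle_x_eq, map_neg, map_neg, map_add, map_add, reflection_doubleSwap]
      abel
    _ = (2 : k) • x := by rw [← x_eq, doubleSwap_x, two_smul]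

theorem apply_of_kleinFour_fixed {x : W} (hx : ∀ v ∈ kleinFour, ρ v x = x)
    {a : alternatingGroup (Fin 5)} (ha : a ∈ stabilizer (alternatingGroup (Fin 5)) (0 : Fin 5)) :
    ρ a x = x := by
  obtain ⟨j, v, hv, rfl⟩ := exists_threeCycle_pow_mul ha
  rw [map_mul, Module.End.mul_apply, hx v hv, map_pow, Module.End.pow_apply]
  exact Function.iterate_fixed (threeCycle_apply_of_kleinFour_fixed h2 hρ hx) j

theorem apply_mul_kleinFourSum {a : alternatingGroup (Fin 5)}
    (ha : a ∈ stabilizer (alternatingGroup (Fin 5)) (0 : Fin 5)) :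
    ρ a * kleinFourSum ρ = kleinFourSum ρ := by
  ext x
  refine apply_of_kleinFour_fixed h2 hρ (fun v hv ↦ ?_) ha
  exact Representation.self_norm_apply (ρ.comp kleinFour.subtype) ⟨v, hv⟩ x

theorem kleinFourSum_mul_apply {a : alternatingGroup (Fin 5)}
    (ha : a ∈ stabilizer (alternatingGroup (Fin 5)) (0 : Fin 5)) :
    kleinFourSum ρ * ρ a = kleinFourSum ρ :=
  (commute_norm_of_mem_normalizer ρ (stabilizer_zero_le_normalizer_kleinFour ha)).eq.symm.trans
    (apply_mul_kleinFourSum h2 hρ ha)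

theorem commute_kleinFourSum_mul_mul (π : Module.End k W) {a : alternatingGroup (Fin 5)}
    (ha : a ∈ stabilizer (alternatingGroup (Fin 5)) (0 : Fin 5)) :
    Commute (ρ a) (kleinFourSum ρ * π * kleinFourSum ρ) := by
  rw [Commute, SemiconjBy, mul_assoc _ _ (ρ a), kleinFourSum_mul_apply h2 hρ ha, ← mul_assoc,
    ← mul_assoc, apply_mul_kleinFourSum h2 hρ ha]

theorem sum_involutions_eq_zero (h5 : IsUnit (5 : k)) : ∑ τ ∈ involutions, ρ τ = 0 := by
  have smul_eq : (20 : k) • ∑ τ ∈ involutions, ρ τ = 0 :=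
    calc (20 : k) • ∑ τ ∈ involutions, ρ τ
        = ∑ i, ∑ g, ρ (g * (rotation i * reflection) * g⁻¹) := by
          simp only [sum_conj_of_mem_involutions ρ (rotation_mul_reflection_mem_involutions _),
            Finset.sum_const, Finset.card_univ, Fintype.card_fin, smul_smul,
            ofNat_smul_eq_nsmul k]
          norm_num
      _ = ∑ g, ρ g * (rotationSum ρ * ρ reflection) * ρ g⁻¹ := by
          rw [Finset.sum_comm]
          simp only [map_mul, rotationSum, Finset.sum_mul, Finset.mul_sum]
      _ = 0 := by simp only [hρ, zero_mul, mul_zero, Finset.sum_const_zero]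
  exact (isUnit_twenty h2 h5).smul_eq_zero.1 smul_eq

theorem relativeTrace_kleinFourSum (h5 : IsUnit (5 : k)) :
    relativeTrace ρ rotation (kleinFourSum ρ) = (5 : k) • 1 := by
  have := sum_rotation_conj_kleinFour ρ
  rw [sum_involutions_eq_zero h2 hρ h5, add_zero, map_one] at this
  simpa only [relativeTrace, kleinFourSum, Representation.norm, Finset.mul_sum, Finset.sum_mul,
    MonoidHom.comp_apply, Subgroup.subtype_apply, map_mul, ofNat_smul_eq_nsmul k] using this

theorem relativeTrace_kleinFourSum_mul_mul_apply (h5 : IsUnit (5 : k)) {U : Submodule k W}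
    (hU : ∀ g, ∀ x ∈ U, ρ g x ∈ U) {π : Module.End k W} (hπ : ∀ x ∈ U, π x = x) {x : W}
    (hx : x ∈ U) :
    relativeTrace ρ rotation (kleinFourSum ρ * π * kleinFourSum ρ) x = (20 : k) • x := by
  have apply_eq_smul : ∀ y ∈ U, (kleinFourSum ρ * π * kleinFourSum ρ) y =
      ((4 : k) • kleinFourSum ρ) y := fun y hy ↦ by
    rw [← kleinFourSum_mul_self, Module.End.mul_apply, Module.End.mul_apply, Module.End.mul_apply,
      hπ _ (kleinFourSum_apply_mem ρ hU hy)]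
  rw [relativeTrace_apply_congr hU apply_eq_smul hx, relativeTrace_smul,
    relativeTrace_kleinFourSum h2 hρ h5, smul_smul, LinearMap.smul_apply, Module.End.one_apply]
  norm_num

theorem exists_invariant_isCompl_of_rotationSum_eq_zero (h5 : IsUnit (5 : k)) {U : Submodule k W}
    (hU : ∀ g, ∀ x ∈ U, ρ g x ∈ U) (hcompl : ∃ U', IsCompl U U') :
    ∃ U' : Submodule k W, (∀ g, ∀ x ∈ U', ρ g x ∈ U') ∧ IsCompl U U' := by
  obtain ⟨L, hL⟩ := hcompl
  obtain ⟨π, hπ⟩ : ∃ π : Module.End k W, LinearMap.IsProj U π :=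
    ⟨U.projection L hL, Submodule.projection_apply_mem hL,
      fun _ hx ↦ Submodule.projection_apply_of_mem_left hL hx⟩
  obtain ⟨b, hb⟩ := (isUnit_twenty h2 h5).exists_left_inv
  have apply_mem (x : W) : (kleinFourSum ρ * π * kleinFourSum ρ) x ∈ U := by
    rw [Module.End.mul_apply, Module.End.mul_apply]
    exact kleinFourSum_apply_mem ρ hU (hπ.map_mem _)
  refine exists_invariant_isCompl_of_isProj ρ
    (f := b • relativeTrace ρ rotation (kleinFourSum ρ * π * kleinFourSum ρ))
    ⟨fun x ↦ U.smul_mem b (relativeTrace_apply_mem hU apply_mem x), fun x hx ↦ ?_⟩ fun g ↦ ?_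
  · rw [LinearMap.smul_apply, relativeTrace_kleinFourSum_mul_mul_apply h2 hρ h5 hU hπ.map_id hx,
      smul_smul, hb, one_smul]
  · exact (commute_relativeTrace rotation_smul_zero
      (fun _ ↦ commute_kleinFourSum_mul_mul h2 hρ π) g).smul_right b

end RotationSum

theorem sum_rho_rotation (r : ℕ) :
    ∑ i, (rho r).comp (alternatingGroup (Fin 5)).subtype (rotation i) = 0 := by
  have inv_smul : ∀ i j : Fin 5, (rotation i)⁻¹ • j = j - i := by decide
  ext f j
  calc _ = ∑ i, (f : Fin 5 → ZMod r) ((rotation i)⁻¹ • j) := by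
        rw [LinearMap.sum_apply, AddSubmonoidClass.coe_finsetSum, Finset.sum_apply]
        rfl
    _ = ∑ i, (f : Fin 5 → ZMod r) i := by
        simp only [inv_smul]
        exact Equiv.sum_comp (Equiv.subLeft j) (f : Fin 5 → ZMod r)
    _ = 0 := f.2

end AltFive

theorem completely_reducible_of_all_factors_V_general
    (r : ℕ) (hr : Nat.Coprime 10 r)
    (W : Type*) [AddCommGroup W] [Module (ZMod r) W]
    (ρ : Representation (ZMod r) (alternatingGroup (Fin 5)) W)
    (n : ℕ) (c : ℕ → Submodule (ZMod r) W)
    (h0 : c 0 = ⊥) (hn : c n = ⊤)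
    (hinv : ∀ i : ℕ, ∀ σ : alternatingGroup (Fin 5), ∀ x ∈ c i, ρ σ x ∈ c i)
    (hfactors : ∀ i < n,
      ∃ e : (c (i + 1) ⧸ (c i).comap (c (i + 1)).subtype) ≃ₗ[ZMod r] V r,
        ∀ σ : alternatingGroup (Fin 5), ∀ x y : c (i + 1),
          (x : W) = ρ σ y →
          e (Submodule.Quotient.mk x) =
            rho r (σ : Equiv.Perm (Fin 5)) (e (Submodule.Quotient.mk y))) :
    ∀ U : Submodule (ZMod r) W,
      (∀ σ : alternatingGroup (Fin 5), ∀ x ∈ U, ρ σ x ∈ U) →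
      (∃ U' : Submodule (ZMod r) W, IsCompl U U') →
      ∃ U' : Submodule (ZMod r) W,
        (∀ σ : alternatingGroup (Fin 5), ∀ x ∈ U', ρ σ x ∈ U') ∧ IsCompl U U' := by
  intro U hU hcompl
  have h2 : IsUnit (2 : ZMod r) :=
    mod_cast (ZMod.isUnit_iff_coprime 2 r).2 (hr.coprime_dvd_left (by decide))
  have h5 : IsUnit (5 : ZMod r) :=
    mod_cast (ZMod.isUnit_iff_coprime 5 r).2 (hr.coprime_dvd_left (by decide))
  have hρ : AltFive.rotationSum ρ = 0 := by
    refine AltFive.eq_zero_of_mul_self_eq_smul_of_filtration h5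
      (AltFive.rotationSum_mul_self ρ) h0 hn fun i hi x hx ↦ ?_
    obtain ⟨e, he⟩ := hfactors i hi
    exact AltFive.sum_apply_mem_of_quotient_embedding ρ _ (hinv (i + 1)) e e.injective he
      (AltFive.sum_rho_rotation r) hx
  exact AltFive.exists_invariant_isCompl_of_rotationSum_eq_zero h2 hρ h5 hU hcompl

/-- Lemma 2.2 (Astill–Parker–Waldecker): for an odd prime `r ≠ 5`, any finite-dimensional
`Alt(5)`-module over `ZMod r` all of whose composition factors (along some invariant
filtration) are isomorphic to the deleted permutation module `V` is completely
reducible: every invariant subspace has an invariant direct complement. -/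
theorem completely_reducible_of_all_factors_V
    (r : ℕ) (hr : r.Prime) (hodd : Odd r) (hr5 : r ≠ 5)
    (W : Type*) [AddCommGroup W] [Module (ZMod r) W] [Module.Finite (ZMod r) W]
    (ρ : Representation (ZMod r) (alternatingGroup (Fin 5)) W)
    (n : ℕ) (c : ℕ → Submodule (ZMod r) W)
    (hmono : Monotone c) (h0 : c 0 = ⊥) (hn : c n = ⊤)
    (hinv : ∀ i : ℕ, ∀ σ : alternatingGroup (Fin 5), ∀ x ∈ c i, ρ σ x ∈ c i)
    (hfactors : ∀ i < n,
      ∃ e : (c (i + 1) ⧸ (c i).comap (c (i + 1)).subtype) ≃ₗ[ZMod r] V r,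
        ∀ σ : alternatingGroup (Fin 5), ∀ x y : c (i + 1),
          (x : W) = ρ σ y →
          e (Submodule.Quotient.mk x) =
            rho r (σ : Equiv.Perm (Fin 5)) (e (Submodule.Quotient.mk y))) :
    ∀ U : Submodule (ZMod r) W,
      (∀ σ : alternatingGroup (Fin 5), ∀ x ∈ U, ρ σ x ∈ U) →
      ∃ U' : Submodule (ZMod r) W,
        (∀ σ : alternatingGroup (Fin 5), ∀ x ∈ U', ρ σ x ∈ U') ∧ IsCompl U U' := by
  have : Fact r.Prime := ⟨hr⟩
  have hr10 : Nat.Coprime 10 r :=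
    .mul_left (Nat.coprime_two_left.2 hodd) ((Nat.coprime_primes Nat.prime_five hr).2 hr5.symm)
  exact fun U hU ↦ completely_reducible_of_all_factors_V_general r hr10 W ρ n c h0 hn hinv
    hfactors U hU (exists_isCompl U)
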